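/- arXiv:2309.03068 — 2 statements merged into one kernel-verified Lean document; each statement's English description precedes it below -/
import Mathlib

section
/- Let δ ∈ (0,1] and let μ, ν be Borel probability measures on [-1,1]. Set A := ∫_{|ξ|≤2/δ} |μ^(ξ)|² dξ and B := ∫_{|ξ|≤2/δ} |ν^(ξ)|² dξ. Then for all ξ with 1 ≤ |ξ| ≤ δ^{-1}, |∫∫ e^{-2πiξxy} dμ(x)dν(y)| ≤ C(√(AB/|ξ|) + δ) for an absolute constant C. -/
open MeasureTheory

/-- Fourier transform of a measure: `σ^(ξ) = ∫ e^{-2πiξt} dσ(t)`. -/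
noncomputable def ft (σ : Measure ℝ) (ξ : ℝ) : ℂ :=
  ∫ t, Complex.exp (-(2 * Real.pi * ξ * t) * Complex.I) ∂σ

open scoped FourierTransform SchwartzMap

/-- The integrand `e^{-2πiξt}`. -/
noncomputable def ee (ξ t : ℝ) : ℂ := Complex.exp (-(2 * Real.pi * ξ * t) * Complex.I)

lemma ee_norm (ξ t : ℝ) : ‖ee ξ t‖ = 1 := by
  have : ee ξ t = Complex.exp ((-(2 * Real.pi * ξ * t) : ℝ) * Complex.I) := by
    simp [ee]
  rw [this, Complex.norm_exp_ofReal_mul_I]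

lemma ee_cont : Continuous (fun p : ℝ × ℝ => ee p.1 p.2) := by
  unfold ee; fun_prop

lemma ft_eq (σ : Measure ℝ) (ξ : ℝ) : ft σ ξ = ∫ t, ee ξ t ∂σ := rfl

lemma ee_add (a b t : ℝ) : ee (a + b) t = ee a t * ee b t := by
  unfold ee; rw [← Complex.exp_add]; congr 1; push_cast; ring

lemma ft_norm_le (σ : Measure ℝ) [IsProbabilityMeasure σ] (ξ : ℝ) : ‖ft σ ξ‖ ≤ 1 := by
  rw [ft_eq]
  refine (norm_integral_le_integral_norm _).trans ?_
  simp [ee_norm]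

lemma ft_charFun (σ : Measure ℝ) (ξ : ℝ) : ft σ ξ = charFun σ (-(2 * Real.pi) * ξ) := by
  rw [charFun_apply, ft]
  congr 1; ext t; congr 1
  simp

lemma ft_contDiff (σ : Measure ℝ) [IsProbabilityMeasure σ]
    (h : σ (Set.Icc (-1:ℝ) 1)ᶜ = 0) : ContDiff ℝ ((⊤ : ℕ∞) : WithTop ℕ∞) (ft σ) := by
  have h1 : ContDiff ℝ ((⊤ : ℕ∞) : WithTop ℕ∞) (charFun σ) := by
    apply contDiff_charFun'
    intro k
    apply MemLp.of_bound (C := 1) (by fun_prop)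
    have : ∀ᵐ x ∂σ, x ∈ Set.Icc (-1:ℝ) 1 := h
    filter_upwards [this] with x hx
    simpa [abs_le] using hx
  have : ft σ = fun ξ => charFun σ (-(2 * Real.pi) * ξ) := funext (ft_charFun σ)
  rw [this]
  exact h1.comp (by fun_prop)

/-- existence of the cutoff -/
lemma exists_cutoff : ∃ χ : 𝓢(ℝ, ℂ), (∀ y ∈ Set.Icc (-1:ℝ) 1, χ y = 1) ∧ (∀ y, ‖χ y‖ ≤ 1) ∧
    (∀ y, y ∉ Set.Icc (-2:ℝ) 2 → χ y = 0) ∧ HasCompactSupport χ := by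
  let b : ContDiffBump (0:ℝ) := ⟨1, 2, by norm_num, by norm_num⟩
  have hc : HasCompactSupport (fun y => (b y : ℂ)) :=
    b.hasCompactSupport.comp_left (g := fun r : ℝ => (r : ℂ)) (by simp)
  have hd : ContDiff ℝ ((⊤ : ℕ∞) : WithTop ℕ∞) (fun y => (b y : ℂ)) :=
    Complex.ofRealCLM.contDiff.comp b.contDiff
  refine ⟨hc.toSchwartzMap hd, ?_, ?_, ?_, hc⟩
  · intro y hy
    have : b y = 1 := b.one_of_mem_closedBall (by
      simpa [b, Real.closedBall_eq_Icc] using hy)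
    simp [this]
  · intro y
    simp [abs_of_nonneg b.nonneg, b.le_one]
  · intro y hy
    have : b y = 0 := b.zero_of_le_dist (by
      simp only [b, Real.dist_eq, sub_zero]
      by_contra hlt
      push Not at hlt
      exact hy (abs_le.mp hlt.le))
    simp [this]

set_option maxHeartbeats 2000000 in
lemma main_bound (χ : 𝓢(ℝ, ℂ)) (h1 : ∀ y ∈ Set.Icc (-1:ℝ) 1, χ y = 1)
    (hb : ∀ y, ‖χ y‖ ≤ 1) (h0 : ∀ y, y ∉ Set.Icc (-2:ℝ) 2 → χ y = 0) (hcs : HasCompactSupport χ)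
    (ψ : 𝓢(ℝ, ℂ)) (hψ : ψ = 𝓕⁻ χ)
    (δ : ℝ) (hδ : δ ∈ Set.Ioc (0:ℝ) 1) (μ ν : Measure ℝ) [IsProbabilityMeasure μ]
    [IsProbabilityMeasure ν] (hμ : μ (Set.Icc (-1:ℝ) 1)ᶜ = 0) (hν : ν (Set.Icc (-1:ℝ) 1)ᶜ = 0)
    (ξ : ℝ) (hξ1 : 1 ≤ |ξ|) (hξ : |ξ| ≤ δ⁻¹) :
    ‖∫ x, ft ν (ξ * x) ∂μ‖ ≤
      Real.sqrt ((∫ u in Set.Icc (-(2/δ)) (2/δ), ‖ft μ u‖ ^ 2) *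
              (∫ u in Set.Icc (-(2/δ)) (2/δ), ‖ft ν u‖ ^ 2) / |ξ|)
       + δ * ∫ s, ‖s‖ * ‖ψ s‖ := by
  have hμ' : ∀ᵐ x ∂μ, x ∈ Set.Icc (-1:ℝ) 1 := hμ
  have hν' : ∀ᵐ x ∂ν, x ∈ Set.Icc (-1:ℝ) 1 := hν
  have hδ0 : 0 < δ := hδ.1
  have hψc : Continuous ψ := ψ.continuous
  have hψi : Integrable (fun s => ψ s) := ψ.integrable
  have hftν := (ft_contDiff ν hν).continuous
  have hftμ := (ft_contDiff μ hμ).continuous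
  set S := Set.Icc (-(2/δ)) (2/δ) with hS
  -- inversion formulas
  have inv1 : ∀ y, χ y = ∫ s, ee s y * ψ s := by
    intro y
    have : χ = 𝓕 ψ := by rw [hψ]; simp
    rw [this, SchwartzMap.fourier_coe, Real.fourier_eq']
    congr 1; ext s
    simp only [ee, smul_eq_mul]
    congr 2
    simp; ring
  have inv2 : ∀ s, ψ s = ∫ t, ee (-s) t * χ t := by
    intro y
    rw [hψ, SchwartzMap.fourierInv_coe, Real.fourierInv_eq']
    congr 1; ext s
    simp only [ee, smul_eq_mul]
    congr 2
    simp; ring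
  -- reproducing formula
  have rep : ∀ x, ft ν (ξ * x) = ∫ η, ft ν η * ψ (η - ξ * x) := by
    intro x
    have e1 : ft ν (ξ * x) = ∫ y, (∫ η, ee η y * ψ (η - ξ * x)) ∂ν := by
      rw [ft_eq]
      apply integral_congr_ae
      filter_upwards [hν'] with y hy
      have := inv1 y
      rw [h1 y hy] at this
      rw [← integral_add_right_eq_self _ (ξ * x)]
      simp only [add_sub_cancel_right, ee_add]
      calc ee (ξ * x) y = ee (ξ * x) y * 1 := by ring
        _ = _ := by
          rw [this, ← integral_const_mul]
          congr 1; ext s; ring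
    rw [e1, integral_integral_swap]
    · congr 1; ext η
      rw [integral_mul_const, ft_eq]
    · have : Integrable (fun p : ℝ × ℝ => ψ (p.2 - ξ * x)) (ν.prod volume) :=
        (hψi.comp_sub_right (ξ * x)).comp_snd ν
      refine this.mono (Continuous.aestronglyMeasurable ?_) (Filter.Eventually.of_forall ?_)
      · exact (ee_cont.comp (continuous_snd.prodMk continuous_fst)).mul
          (hψc.comp (by fun_prop))
      · intro p
        simp [Function.uncurry, ee_norm]
  have prodint : ∀ x, Integrable (fun η => ft ν η * ψ (η - ξ * x)) := by
    intro x
    refine (hψi.comp_sub_right (ξ * x)).mono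
      (hftν.mul (hψc.comp (by fun_prop))).aestronglyMeasurable (Filter.Eventually.of_forall ?_)
    intro η
    rw [norm_mul]
    exact mul_le_of_le_one_left (norm_nonneg _) (ft_norm_le ν η)
  have hMi : Integrable (fun s => ‖s‖ * ‖ψ s‖) := by
    simpa using ψ.integrable_pow_mul volume 1
  -- error term
  have err : ∀ x ∈ Set.Icc (-1:ℝ) 1,
      ‖∫ η in Sᶜ, ft ν η * ψ (η - ξ * x)‖ ≤ δ * ∫ s, ‖s‖ * ‖ψ s‖ := by
    intro x hx
    have hi : Integrable (fun η => δ * (‖η - ξ * x‖ * ‖ψ (η - ξ * x)‖)) :=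
      (hMi.comp_sub_right (ξ * x)).const_mul δ
    calc ‖∫ η in Sᶜ, ft ν η * ψ (η - ξ * x)‖
        ≤ ∫ η in Sᶜ, δ * (‖η - ξ * x‖ * ‖ψ (η - ξ * x)‖) := by
          apply norm_integral_le_of_norm_le hi.integrableOn
          refine (ae_restrict_iff' measurableSet_Icc.compl).2 (Filter.Eventually.of_forall ?_)
          intro η hη
          rw [norm_mul]
          have hη2 : 2 / δ < |η| := by
            by_contra hlt
            push Not at hlt
            exact hη (abs_le.mp hlt)
          have hxa : |x| ≤ 1 := abs_le.mpr hx
          have hxx : |ξ * x| ≤ δ⁻¹ := by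
            rw [abs_mul]
            exact (mul_le_of_le_one_right (abs_nonneg _) hxa).trans hξ
          have h3 : δ⁻¹ ≤ |η - ξ * x| := by
            have := abs_sub_abs_le_abs_sub η (ξ * x)
            have e : 2 / δ = δ⁻¹ + δ⁻¹ := by ring
            linarith
          have h4 : 1 ≤ δ * |η - ξ * x| := by
            have := mul_le_mul_of_nonneg_left h3 hδ0.le
            rwa [mul_inv_cancel₀ hδ0.ne'] at this
          rw [← mul_assoc, Real.norm_eq_abs (η - ξ * x)]
          exact mul_le_mul_of_nonneg_right ((ft_norm_le ν η).trans h4) (norm_nonneg _)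
      _ ≤ ∫ η, δ * (‖η - ξ * x‖ * ‖ψ (η - ξ * x)‖) :=
          setIntegral_le_integral hi (Filter.Eventually.of_forall fun η => by
            simp only [Pi.zero_apply]; positivity)
      _ = δ * ∫ s, ‖s‖ * ‖ψ s‖ := by
          rw [integral_const_mul, integral_sub_right_eq_self (fun s => ‖s‖ * ‖ψ s‖) (ξ * x)]
  -- the function g
  let g : ℝ → ℂ := fun t => χ t * ft μ (ξ * t)
  have hgc : HasCompactSupport g := hcs.mul_right
  have hgd : ContDiff ℝ ((⊤ : ℕ∞) : WithTop ℕ∞) g :=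
    (χ.smooth ⊤).mul ((ft_contDiff μ hμ).comp (by fun_prop))
  let G : 𝓢(ℝ, ℂ) := hgc.toSchwartzMap hgd
  have hG : ∀ t, G t = χ t * ft μ (ξ * t) := fun t => rfl
  let F : 𝓢(ℝ, ℂ) := 𝓕⁻ G
  have hF : ∀ η, F η = ∫ x, ψ (η - ξ * x) ∂μ := by
    intro η
    have : F η = ∫ t, ee (-η) t * G t := by
      simp only [F]
      rw [SchwartzMap.fourierInv_coe, Real.fourierInv_eq']
      congr 1; ext s
      simp only [ee, smul_eq_mul]
      congr 2
      simp; ring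
    rw [this]
    have e2 : ∀ x, ψ (η - ξ * x) = ∫ t, ee (-η) t * χ t * ee (ξ * t) x := by
      intro x
      rw [inv2]
      congr 1; ext t
      rw [neg_sub, sub_eq_neg_add, ee_add]
      have : ee (ξ * x) t = ee (ξ * t) x := by
        unfold ee; congr 2; push_cast; ring
      rw [this]; ring
    simp_rw [e2]
    rw [integral_integral_swap]
    · congr 1; ext t
      rw [integral_const_mul, hG, ← ft_eq]; ring
    · have : Integrable (fun p : ℝ × ℝ => χ p.2) (μ.prod volume) :=
        (χ.integrable).comp_snd μ
      refine this.mono (Continuous.aestronglyMeasurable ?_) (Filter.Eventually.of_forall ?_)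
      · have c1 : Continuous (fun p : ℝ × ℝ => ee (-η) p.2) :=
          ee_cont.comp (continuous_const.prodMk continuous_snd)
        have c2 : Continuous (fun p : ℝ × ℝ => ee (ξ * p.2) p.1) :=
          ee_cont.comp ((continuous_const.mul continuous_snd).prodMk continuous_fst)
        exact (c1.mul (χ.continuous.comp continuous_snd)).mul c2
      · intro p
        simp [Function.uncurry, ee_norm]
  have planch : ∫ η, ‖F η‖ ^ 2 = ∫ t, ‖G t‖ ^ 2 := by
    rw [← SchwartzMap.integral_norm_sq_fourier F]
    simp [F]
  have hA : ∫ t, ‖G t‖ ^ 2 ≤ (∫ u in S, ‖ft μ u‖ ^ 2) / |ξ| := by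
    have hξ0 : ξ ≠ 0 := by rintro rfl; simp at hξ1; linarith
    let h : ℝ → ℝ := S.indicator (fun u => ‖ft μ u‖ ^ 2)
    have hh : ∫ t, h (ξ * t) = (∫ u in S, ‖ft μ u‖ ^ 2) / |ξ| := by
      rw [Measure.integral_comp_mul_left, integral_indicator measurableSet_Icc, abs_inv,
        smul_eq_mul]
      ring
    have hint : Integrable h :=
      (integrable_indicator_iff measurableSet_Icc).2
        ((hftμ.norm.pow 2).continuousOn.integrableOn_Icc)
    rw [← hh]
    apply integral_mono_of_nonneg (Filter.Eventually.of_forall fun t => by positivity)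
      (hint.comp_mul_left' hξ0)
    refine Filter.Eventually.of_forall fun t => ?_
    by_cases ht : t ∈ Set.Icc (-2:ℝ) 2
    · have hm : ξ * t ∈ S := by
        have : |ξ * t| ≤ 2 / δ := by
          rw [abs_mul, div_eq_mul_inv, mul_comm]
          exact mul_le_mul (abs_le.mpr ht) hξ (abs_nonneg _) (by norm_num)
        exact abs_le.mp this
      simp only [h, Set.indicator_of_mem hm, hG, norm_mul]
      exact pow_le_pow_left₀ (by positivity)
        (mul_le_of_le_one_left (norm_nonneg _) (hb t)) 2
    · simp only [hG, h0 t ht]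
      simp only [zero_mul, norm_zero]
      rw [zero_pow two_ne_zero]
      exact Set.indicator_nonneg (fun _ _ => by positivity) _
  -- integrability in x of pieces
  have mainint : Integrable (Function.uncurry fun x η => ft ν η * ψ (η - ξ * x))
      (μ.prod (volume.restrict S)) := by
    have hfin : IsFiniteMeasure (volume.restrict S) := by
      rw [hS]; infer_instance
    have hK := ψ.toBoundedContinuousFunction.norm_coe_le_norm
    refine Integrable.of_bound (C := ‖ψ.toBoundedContinuousFunction‖) (Continuous.aestronglyMeasurable ?_)
      (Filter.Eventually.of_forall ?_)
    · exact (hftν.comp continuous_snd).mul (hψc.comp (by fun_prop))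
    · intro p
      have := hK (p.2 - ξ * p.1)
      simp only [Function.uncurry, norm_mul]
      exact (mul_le_of_le_one_left (norm_nonneg _) (ft_norm_le ν _)).trans this
  have hsplit : ∀ x, ft ν (ξ * x) - ∫ η in S, ft ν η * ψ (η - ξ * x)
      = ∫ η in Sᶜ, ft ν η * ψ (η - ξ * x) := by
    intro x
    rw [rep x, ← integral_add_compl (s := S) measurableSet_Icc (prodint x)]
    ring
  have hftint : Integrable (fun x => ft ν (ξ * x)) μ := by
    refine Integrable.of_bound (C := 1) (Continuous.aestronglyMeasurable (by fun_prop))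
      (Filter.Eventually.of_forall fun x => ft_norm_le ν _)
  have hmx : Integrable (fun x => ∫ η in S, ft ν η * ψ (η - ξ * x)) μ :=
    mainint.integral_prod_left
  have hdiff : ‖(∫ x, ft ν (ξ * x) ∂μ) - ∫ x, (∫ η in S, ft ν η * ψ (η - ξ * x)) ∂μ‖
      ≤ δ * ∫ s, ‖s‖ * ‖ψ s‖ := by
    rw [← integral_sub hftint hmx]
    have := norm_integral_le_of_norm_le_const (μ := μ)
      (f := fun x => ft ν (ξ * x) - ∫ η in S, ft ν η * ψ (η - ξ * x))
      (C := δ * ∫ s, ‖s‖ * ‖ψ s‖) (by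
        filter_upwards [hμ'] with x hx
        rw [hsplit x]
        exact err x hx)
    simpa using this
  have hmain : ‖∫ x, (∫ η in S, ft ν η * ψ (η - ξ * x)) ∂μ‖ ≤
      Real.sqrt ((∫ u in S, ‖ft μ u‖ ^ 2) * (∫ u in S, ‖ft ν u‖ ^ 2) / |ξ|) := by
    have e3 : ∫ x, (∫ η in S, ft ν η * ψ (η - ξ * x)) ∂μ = ∫ η in S, ft ν η * F η := by
      rw [integral_integral_swap mainint]
      congr 1; ext η
      rw [integral_const_mul, hF]
    rw [e3]
    have mν : MemLp (ft ν) (ENNReal.ofReal 2) (volume.restrict S) := by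
      have hfin : IsFiniteMeasure (volume.restrict S) := by
        rw [hS]; infer_instance
      exact MemLp.of_bound hftν.aestronglyMeasurable 1
        (Filter.Eventually.of_forall fun x => ft_norm_le ν _)
    have mF0 : MemLp F (ENNReal.ofReal 2) volume := F.memLp _ _
    have cs := integral_mul_norm_le_Lp_mul_Lq Real.HolderConjugate.two_two mν (mF0.restrict S)
    have hFS : ∫ η in S, ‖F η‖ ^ 2 ≤ (∫ u in S, ‖ft μ u‖ ^ 2) / |ξ| := by
      refine le_trans (setIntegral_le_integral ?_ ?_) (planch.le.trans hA)
      · have := mF0.integrable_norm_rpow (by simp) (by simp)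
        simpa using this
      · exact Filter.Eventually.of_forall fun η => by simp only [Pi.zero_apply]; positivity
    simp only [Real.rpow_two, ← Real.sqrt_eq_rpow] at cs
    calc ‖∫ η in S, ft ν η * F η‖ ≤ ∫ η in S, ‖ft ν η‖ * ‖F η‖ := by
          refine (norm_integral_le_integral_norm _).trans (le_of_eq ?_)
          simp only [norm_mul]
      _ ≤ _ := cs
      _ ≤ √(∫ u in S, ‖ft ν u‖ ^ 2) * √((∫ u in S, ‖ft μ u‖ ^ 2) / |ξ|) := by
          gcongr
      _ = _ := by
          rw [← Real.sqrt_mul (integral_nonneg fun _ => by positivity)]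
          congr 1; ring
  have := norm_le_norm_add_norm_sub' (∫ x, ft ν (ξ * x) ∂μ)
    (∫ x, (∫ η in S, ft ν η * ψ (η - ξ * x)) ∂μ)
  linarith

/-- Lemma: for probability measures `μ, ν` on `[-1,1]`, with
`A = ∫_{|ξ|≤2/δ} |μ^|²` and `B = ∫_{|ξ|≤2/δ} |ν^|²`, one has
`|(μ⊠ν)^(ξ)| ≤ C(√(AB/|ξ|) + δ)` for all `1 ≤ |ξ| ≤ δ⁻¹`. -/
theorem stmt1 :
    ∃ C > (0:ℝ), ∀ δ : ℝ, δ ∈ Set.Ioc (0:ℝ) 1 →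
      ∀ μ ν : Measure ℝ, IsProbabilityMeasure μ → IsProbabilityMeasure ν →
      μ (Set.Icc (-1:ℝ) 1)ᶜ = 0 → ν (Set.Icc (-1:ℝ) 1)ᶜ = 0 →
      ∀ ξ : ℝ, 1 ≤ |ξ| → |ξ| ≤ δ⁻¹ →
      ‖∫ x, ∫ y, Complex.exp (-(2 * Real.pi * ξ * (x * y)) * Complex.I) ∂ν ∂μ‖ ≤
        C * (Real.sqrt ((∫ u in Set.Icc (-(2/δ)) (2/δ), ‖ft μ u‖ ^ 2) *
              (∫ u in Set.Icc (-(2/δ)) (2/δ), ‖ft ν u‖ ^ 2) / |ξ|) + δ) := by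
  obtain ⟨χ, h1, hb, h0, hcs⟩ := exists_cutoff
  let ψ : 𝓢(ℝ, ℂ) := 𝓕⁻ χ
  have hM : 0 ≤ ∫ s, ‖s‖ * ‖ψ s‖ := integral_nonneg fun _ => by positivity
  refine ⟨1 + ∫ s, ‖s‖ * ‖ψ s‖, by linarith, ?_⟩
  intro δ hδ μ ν _ _ hμ hν ξ hξ1 hξ
  have key := main_bound χ h1 hb h0 hcs ψ rfl δ hδ μ ν hμ hν ξ hξ1 hξ
  have e : ∫ x, ∫ y, Complex.exp (-(2 * Real.pi * ξ * (x * y)) * Complex.I) ∂ν ∂μ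
      = ∫ x, ft ν (ξ * x) ∂μ := by
    congr 1; ext x
    unfold ft
    congr 1; ext y
    congr 2; push_cast; ring
  rw [e]
  refine key.trans ?_
  have hs := Real.sqrt_nonneg ((∫ u in Set.Icc (-(2/δ)) (2/δ), ‖ft μ u‖ ^ 2) *
              (∫ u in Set.Icc (-(2/δ)) (2/δ), ‖ft ν u‖ ^ 2) / |ξ|)
  have hδ0 := hδ.1
  nlinarith [mul_nonneg hM hs]
end

section
/- Let δ ∈ (0,1], s,t ∈ [0,1], and let μ, ν be Borel probability measures on [-1,1] such that the δ-regularizations satisfy ‖μ_δ‖₂² ≤ δ^{-1+s} and ‖ν_δ‖₂² ≤ δ^{-1+t}. Then for all ξ with δ^{-1} ≤ |ξ| ≤ 2δ^{-1}, |∫∫ e^{-2πiξxy} dμ(x)dν(y)| ≤ C δ^{(s+t-1)/2} for an absolute constant C. -/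
open MeasureTheory

section helpers
open FourierTransform SchwartzMap
open scoped ContDiff

lemma plancherel_aux (f : ℝ → ℂ) (h1 : Integrable f) (h2 : MemLp f 2) :
    MemLp (𝓕 f) 2 ∧ ∫ x, ‖𝓕 f x‖ ^ 2 = ∫ x, ‖f x‖ ^ 2 := by
  have hcont : Continuous (𝓕 f) :=
    VectorFourier.fourierIntegral_continuous Real.continuous_fourierChar
      (L := innerₗ ℝ) (by fun_prop) h1
  set F : Lp ℂ 2 (volume : Measure ℝ) := h2.toLp f with hF
  have hae : ∀ᵐ x, 𝓕 f x = (𝓕 F : Lp ℂ 2 (volume : Measure ℝ)) x := by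
    apply ae_eq_of_integral_contDiff_smul_eq
    · exact hcont.locallyIntegrable
    · exact (Lp.memLp (𝓕 F)).locallyIntegrable (by norm_num)
    · intro g hg hgs
      have hgc : HasCompactSupport (fun x => (g x : ℂ)) :=
        hgs.comp_left (g := fun r : ℝ => (r : ℂ)) (by simp)
      have hgd : ContDiff ℝ ∞ (fun x => (g x : ℂ)) := Complex.ofRealCLM.contDiff.comp hg
      let γ : 𝓢(ℝ, ℂ) := hgc.toSchwartzMap hgd
      have hγ : ∀ x, γ x = (g x : ℂ) := fun x => rfl
      have e1 := congrArg (fun T => T γ) (Lp.fourier_toTemperedDistribution_eq F)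
      simp only [TemperedDistribution.fourier_apply, Lp.toTemperedDistribution_apply] at e1
      have e2 : ∫ x, (𝓕 f x) • (γ x) = ∫ x, f x • (𝓕 (γ : ℝ → ℂ) x) := by
        simpa only [flip_innerₗ] using! VectorFourier.integral_fourierIntegral_smul_eq_flip (L := innerₗ ℝ) (μ := volume)
          (ν := volume) Real.continuous_fourierChar (by fun_prop) h1 γ.integrable
      calc ∫ x, g x • 𝓕 f x = ∫ x, (𝓕 f x) • (γ x) := by
            congr 1; ext x; simp [hγ, mul_comm]
        _ = _ := e2
        _ = ∫ x, (𝓕 γ) x • F x := by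
            apply integral_congr_ae
            filter_upwards [h2.coeFn_toLp] with x hx
            rw [hF, hx, SchwartzMap.fourier_coe]; simp [mul_comm]
        _ = _ := e1
        _ = _ := by congr 1
  have hm : MemLp (𝓕 f) 2 := (memLp_congr_ae hae).2 (Lp.memLp _)
  refine ⟨hm, ?_⟩
  have hn : ∀ G : Lp ℂ 2 (volume : Measure ℝ), ‖G‖ ^ 2 = ∫ x, ‖G x‖ ^ 2 := by
    intro G
    have := L2.inner_def (𝕜 := ℂ) G G
    rw [inner_self_eq_norm_sq_to_K] at this
    simp only [inner_self_eq_norm_sq_to_K] at this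
    have h3 : ((‖G‖ ^ 2 : ℝ) : ℂ) = ((∫ x, ‖G x‖ ^ 2 : ℝ) : ℂ) := by
      rw [← integral_complex_ofReal]
      push_cast
      exact this
    exact_mod_cast h3
  calc ∫ x, ‖𝓕 f x‖ ^ 2 = ∫ x, ‖(𝓕 F : Lp ℂ 2 (volume : Measure ℝ)) x‖ ^ 2 := by
        apply integral_congr_ae
        filter_upwards [hae] with x hx
        rw [hx]
    _ = ∫ x, ‖F x‖ ^ 2 := by rw [← hn, ← hn, Lp.norm_fourier_eq]
    _ = _ := by
        apply integral_congr_ae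
        filter_upwards [h2.coeFn_toLp] with x hx
        rw [hF, hx]

lemma memLp_aux {E : Type*} [NormedAddCommGroup E] [NormedSpace ℝ E]
    (ρ : Measure ℝ) [IsProbabilityMeasure ρ] (h : ρ (Set.Icc (-1:ℝ) 1)ᶜ = 0)
    (K : ℝ → ℝ → E) (hK : StronglyMeasurable (Function.uncurry K)) (M : ℝ)
    (hM : ∀ v y, ‖K v y‖ ≤ M)
    (hs : ∀ v y, 1 < |v - y| → K v y = 0) (p : ENNReal) :
    (∀ v, 2 < |v| → ∫ y, K v y ∂ρ = 0) ∧ MemLp (fun v => ∫ y, K v y ∂ρ) p volume := by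
  have hz : ∀ v, 2 < |v| → ∫ y, K v y ∂ρ = 0 := by
    intro v hv
    apply integral_eq_zero_of_ae
    have : ∀ᵐ y ∂ρ, y ∈ Set.Icc (-1:ℝ) 1 := by rwa [ae_iff]
    filter_upwards [this] with y hy
    apply hs
    have := abs_le.2 hy
    have := abs_sub_abs_le_abs_sub v y
    linarith
  refine ⟨hz, ?_⟩
  have hmeas : StronglyMeasurable (fun v => ∫ y, K v y ∂ρ) := hK.integral_prod_right
  have hind : (fun v => ∫ y, K v y ∂ρ)
      = (Set.Icc (-2:ℝ) 2).indicator (fun v => ∫ y, K v y ∂ρ) := by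
    ext v
    by_cases hv : v ∈ Set.Icc (-2:ℝ) 2
    · rw [Set.indicator_of_mem hv]
    · rw [Set.indicator_of_notMem hv]
      apply hz
      by_contra hc
      exact hv (abs_le.1 (not_lt.1 hc))
  rw [hind, memLp_indicator_iff_restrict measurableSet_Icc]
  refine MemLp.of_bound hmeas.aestronglyMeasurable M (Filter.Eventually.of_forall fun v => ?_)
  have := norm_integral_le_of_norm_le_const (μ := ρ) (Filter.Eventually.of_forall (hM v))
  simpa using this

lemma swap_aux (ρ : Measure ℝ) [IsProbabilityMeasure ρ] (k : ℝ → ℝ)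
    (hkm : Measurable k) (hki : Integrable k) (β φ : ℝ → ℂ) (hβ : Measurable β) (hφ : Measurable φ)
    (B C : ℝ) (hB : ∀ y, ‖β y‖ ≤ B) (hC : ∀ y, ‖φ y‖ ≤ C) :
    ∫ y, β y * (∫ w, (k w : ℂ) * φ (y + w)) ∂ρ
      = ∫ v, φ v * ∫ y, (k (v - y) : ℂ) * β y ∂ρ := by
  have hB0 : 0 ≤ B := (norm_nonneg _).trans (hB 0)
  have hC0 : 0 ≤ C := (norm_nonneg _).trans (hC 0)
  have hshift : ∀ y, ∫ w, (k w : ℂ) * φ (y + w) = ∫ v, (k (v - y) : ℂ) * φ v := by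
    intro y
    rw [← integral_sub_right_eq_self _ y]
    simp
  have hm : Measurable (fun z : ℝ × ℝ => β z.1 * ((k (z.2 - z.1) : ℂ) * φ z.2)) := by
    fun_prop
  have hsec : ∀ y, Integrable (fun v => β y * ((k (v - y) : ℂ) * φ v)) := by
    intro y
    refine Integrable.const_mul ?_ _
    refine Integrable.mul_bdd (c := C) (hki.comp_sub_right y).ofReal hφ.aestronglyMeasurable
      (Filter.Eventually.of_forall hC)
  have hint : Integrable (fun z : ℝ × ℝ => β z.1 * ((k (z.2 - z.1) : ℂ) * φ z.2))
      (ρ.prod volume) := by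
    rw [integrable_prod_iff hm.aestronglyMeasurable]
    refine ⟨Filter.Eventually.of_forall hsec, ?_⟩
    refine Integrable.of_bound (C := B * (∫ v, ‖k v‖) * C)
      hm.norm.stronglyMeasurable.integral_prod_right'.aestronglyMeasurable
      (Filter.Eventually.of_forall fun y => ?_)
    rw [Real.norm_of_nonneg (integral_nonneg fun _ => norm_nonneg _)]
    calc ∫ v, ‖β y * ((k (v - y) : ℂ) * φ v)‖ ≤ ∫ v, B * ‖k (v - y)‖ * C := by
          refine integral_mono (hsec y).norm
            (((hki.comp_sub_right y).norm.const_mul _).mul_const _) fun v => ?_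
          simp only [norm_mul, Complex.norm_real]
          rw [mul_assoc]
          gcongr
          · exact hB y
          · exact hC v
      _ = B * (∫ v, ‖k v‖) * C := by
          rw [integral_mul_const, integral_const_mul,
            integral_sub_right_eq_self (fun v => ‖k v‖) y]
  calc ∫ y, β y * (∫ w, (k w : ℂ) * φ (y + w)) ∂ρ
      = ∫ y, (∫ v, β y * ((k (v - y) : ℂ) * φ v)) ∂ρ := by
        simp_rw [hshift, integral_const_mul]
    _ = ∫ v, (∫ y, β y * ((k (v - y) : ℂ) * φ v) ∂ρ) := integral_integral_swap hint
    _ = _ := by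
        congr 1; ext v
        rw [← integral_const_mul]
        congr 1; ext y; ring

lemma lower_aux (a r : ℝ) (ha : 0 < a) (hr : |r| * a ≤ 1 / 8) :
    a ≤ ‖∫ w, ((Set.indicator (Set.Icc (-a) a) 1 w : ℝ) : ℂ)
      * Complex.exp (-(2 * Real.pi * (r * w)) * Complex.I)‖ := by
  have hcont : Continuous fun w : ℝ => Complex.exp (-(2 * Real.pi * (r * w)) * Complex.I) := by
    fun_prop
  have hint : IntegrableOn (fun w : ℝ => Complex.exp (-(2 * Real.pi * (r * w)) * Complex.I))
      (Set.Icc (-a) a) := hcont.continuousOn.integrableOn_compact isCompact_Icc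
  have heq : ∫ w, ((Set.indicator (Set.Icc (-a) a) 1 w : ℝ) : ℂ)
      * Complex.exp (-(2 * Real.pi * (r * w)) * Complex.I)
      = ∫ w in Set.Icc (-a) a, Complex.exp (-(2 * Real.pi * (r * w)) * Complex.I) := by
    rw [← integral_indicator measurableSet_Icc]
    congr 1; ext w
    by_cases hw : w ∈ Set.Icc (-a) a <;> simp [hw]
  rw [heq]
  refine le_trans ?_ (Complex.re_le_norm _)
  have h2 : (∫ w in Set.Icc (-a) a, Complex.exp (-(2 * Real.pi * (r * w)) * Complex.I)).re
     = ∫ w in Set.Icc (-a) a, Real.cos (2 * Real.pi * (r * w)) := by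
    have := (integral_re hint).symm
    simp only [RCLike.re_eq_complex_re] at this
    rw [this]
    congr 1; ext w
    have : (-(2 * Real.pi * (r * w)) * Complex.I : ℂ)
      = ((-(2 * Real.pi * (r * w)) : ℝ) : ℂ) * Complex.I := by push_cast; ring
    rw [this, Complex.exp_ofReal_mul_I_re, Real.cos_neg]
  rw [h2]
  have h3 : ∫ w in Set.Icc (-a) a, (1/2 : ℝ) = a := by
    simp
    rw [max_eq_left (by linarith)]; ring
  conv_lhs => rw [← h3]
  refine setIntegral_mono_on (integrable_const _)
    ((by fun_prop : Continuous fun w : ℝ => Real.cos (2 * Real.pi * (r * w))).continuousOn.integrableOn_compact isCompact_Icc)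
    measurableSet_Icc fun w hw => ?_
  refine le_trans ?_ (Real.one_sub_sq_div_two_le_cos)
  have hw' : |w| ≤ a := abs_le.2 hw
  have h4 : |2 * Real.pi * (r * w)| ≤ 1 := by
    rw [abs_mul, abs_mul r w, abs_of_pos (by positivity : (0:ℝ) < 2 * Real.pi)]
    have : |r| * |w| ≤ 1 / 8 := le_trans (by gcongr) hr
    have hpi := Real.pi_lt_four
    have hpp := Real.pi_pos
    nlinarith [abs_nonneg r, abs_nonneg w]
  have : (2 * Real.pi * (r * w)) ^ 2 ≤ 1 := by
    rw [← sq_abs]; exact pow_le_one₀ (abs_nonneg _) h4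
  linarith

/-- The character `r ↦ e^{-2πir}`. -/
noncomputable def eAux (r : ℝ) : ℂ := Complex.exp (-(2 * Real.pi * r) * Complex.I)

lemma eAux_add (r s : ℝ) : eAux (r + s) = eAux r * eAux s := by
  rw [eAux, eAux, eAux, ← Complex.exp_add]; congr 1; push_cast; ring

lemma eAux_norm (r : ℝ) : ‖eAux r‖ = 1 := by
  have : (-(2 * Real.pi * r) * Complex.I : ℂ)
      = ((-(2 * Real.pi * r) : ℝ) : ℂ) * Complex.I := by push_cast; ring
  rw [eAux, this, Complex.norm_exp_ofReal_mul_I]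

lemma eAux_cont : Continuous eAux := by unfold eAux; fun_prop

/-- The window. -/
noncomputable def kAux (a w : ℝ) : ℝ := Set.indicator (Set.Icc (-a) a) 1 w

lemma kAux_meas (a : ℝ) : Measurable (kAux a) := by
  unfold kAux
  exact measurable_one.indicator measurableSet_Icc

lemma kAux_nonneg (a w : ℝ) : 0 ≤ kAux a w := Set.indicator_nonneg (fun _ _ => zero_le_one) _

lemma kAux_le (a w : ℝ) : kAux a w ≤ 1 := by
  unfold kAux
  exact Set.indicator_le_self' (fun _ _ => zero_le_one) w

lemma kAux_zero {a w : ℝ} (h : a < |w|) : kAux a w = 0 := by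
  unfold kAux
  apply Set.indicator_of_notMem
  intro hw
  exact absurd (abs_le.2 hw) (not_le.2 h)

lemma kAux_int (a : ℝ) : Integrable (kAux a) := by
  unfold kAux
  rw [integrable_indicator_iff measurableSet_Icc]
  exact integrableOn_const (by simp) (by simp)

lemma core_aux (ξ a : ℝ) (ha : 0 < a) (ha1 : a ≤ 1) (hξ : ξ ≠ 0) (hξa : |ξ| * 2 * a ≤ 1 / 8)
    (μ ν : Measure ℝ) [IsProbabilityMeasure μ] [IsProbabilityMeasure ν]
    (hμ : μ (Set.Icc (-1:ℝ) 1)ᶜ = 0) (hν : ν (Set.Icc (-1:ℝ) 1)ᶜ = 0) :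
    ‖∫ x, (∫ y, eAux (ξ * (x * y)) ∂ν) ∂μ‖ ≤
      (a⁻¹ * a⁻¹) * (Real.sqrt |ξ|⁻¹ * Real.sqrt (∫ v, (∫ y, kAux a (v - y) ∂ν) ^ 2)
        * Real.sqrt (∫ v, (∫ y, kAux a (v - y) ∂μ) ^ 2)) := by
  have hai : 0 < a⁻¹ := inv_pos.2 ha
  have hE : Measurable eAux := eAux_cont.measurable
  have hk := kAux_meas a
  have hki := kAux_int a
  set S : ℝ → ℂ := fun z => ∫ w, (kAux a w : ℂ) * eAux (ξ * z * w) with hSdef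
  have hSm : Measurable S := by
    refine (StronglyMeasurable.integral_prod_right (f := fun z w : ℝ =>
      (kAux a w : ℂ) * eAux (ξ * z * w)) ?_).measurable
    apply Measurable.stronglyMeasurable
    unfold Function.uncurry
    fun_prop
  have hSlow : ∀ z, |z| ≤ 2 → a ≤ ‖S z‖ := by
    intro z hz
    have := lower_aux a (ξ * z) ha (by
      rw [abs_mul]
      refine le_trans ?_ hξa
      gcongr)
    refine this.trans (le_of_eq ?_)
    simp only [hSdef, kAux, eAux]
    push_cast
    rfl
  set b : ℝ → ℂ := Set.indicator (Set.Icc (-1:ℝ) 1) (fun y => (S y)⁻¹) with hbdef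
  have hbm : Measurable b := hSm.inv.indicator measurableSet_Icc
  have hbB : ∀ y, ‖b y‖ ≤ a⁻¹ := by
    intro y
    by_cases hy : y ∈ Set.Icc (-1:ℝ) 1
    · rw [hbdef, Set.indicator_of_mem hy, norm_inv]
      have : |y| ≤ 1 := abs_le.2 hy
      exact inv_anti₀ ha (hSlow y (by linarith))
    · rw [hbdef, Set.indicator_of_notMem hy]; simpa using hai.le
  have hbS : ∀ᵐ y ∂ν, b y * S y = 1 := by
    have : ∀ᵐ y ∂ν, y ∈ Set.Icc (-1:ℝ) 1 := by rwa [ae_iff]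
    filter_upwards [this] with y hy
    rw [hbdef, Set.indicator_of_mem hy]
    have h1 : |y| ≤ 1 := abs_le.2 hy
    have h2 := hSlow y (by linarith)
    apply inv_mul_cancel₀
    intro h0
    rw [h0, norm_zero] at h2
    linarith
  set G : ℝ → ℂ := fun u => ∫ y, b y * eAux (ξ * u * y) ∂ν with hGdef
  have hGm : Measurable G := by
    refine (StronglyMeasurable.integral_prod_right (f := fun u y : ℝ =>
      b y * eAux (ξ * u * y)) ?_).measurable
    apply Measurable.stronglyMeasurable
    unfold Function.uncurry
    fun_prop
  have hGB : ∀ u, ‖G u‖ ≤ a⁻¹ := by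
    intro u
    have := norm_integral_le_of_norm_le_const (μ := ν) (C := a⁻¹)
      (f := fun y => b y * eAux (ξ * u * y))
      (Filter.Eventually.of_forall fun y => by
        rw [norm_mul, eAux_norm, mul_one]; exact hbB y)
    simpa using this
  -- step 1
  have step1 : ∀ x, ∫ y, eAux (ξ * (x * y)) ∂ν = ∫ w, (kAux a w : ℂ) * G (x + w) := by
    intro x
    have hint : Integrable (fun z : ℝ × ℝ =>
        (kAux a z.1 : ℂ) * (b z.2 * eAux (ξ * (x + z.1) * z.2))) (volume.prod ν) := by
      have h1 : Integrable (fun z : ℝ × ℝ => kAux a z.1 * a⁻¹) (volume.prod ν) :=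
        hki.mul_prod (integrable_const (a⁻¹))
      refine h1.mono' ?_ (Filter.Eventually.of_forall fun z => ?_)
      · apply Measurable.aestronglyMeasurable
        fun_prop
      · rw [norm_mul, norm_mul, eAux_norm, mul_one, Complex.norm_real,
          Real.norm_of_nonneg (kAux_nonneg _ _)]
        exact mul_le_mul_of_nonneg_left (hbB _) (kAux_nonneg _ _)
    symm
    calc ∫ w, (kAux a w : ℂ) * G (x + w)
        = ∫ w, (∫ y, (kAux a w : ℂ) * (b y * eAux (ξ * (x + w) * y)) ∂ν) := by
          simp_rw [hGdef, integral_const_mul]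
      _ = ∫ y, (∫ w, (kAux a w : ℂ) * (b y * eAux (ξ * (x + w) * y))) ∂ν :=
          integral_integral_swap hint
      _ = ∫ y, eAux (ξ * (x * y)) ∂ν := by
          apply integral_congr_ae
          filter_upwards [hbS] with y hy
          have : ∀ w, (kAux a w : ℂ) * (b y * eAux (ξ * (x + w) * y))
              = (b y * eAux (ξ * (x * y))) * ((kAux a w : ℂ) * eAux (ξ * y * w)) := by
            intro w
            rw [show ξ * (x + w) * y = ξ * (x * y) + ξ * y * w by ring, eAux_add]
            ring
          simp_rw [this, integral_const_mul]
          change b y * eAux (ξ * (x * y)) * S y = _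
          rw [mul_right_comm, hy, one_mul]
  set m : ℝ → ℝ := fun v => ∫ y, kAux a (v - y) ∂μ with hm
  set n : ℝ → ℝ := fun v => ∫ y, kAux a (v - y) ∂ν with hn
  have hKm : StronglyMeasurable (Function.uncurry fun v y : ℝ => kAux a (v - y)) := by
    apply Measurable.stronglyMeasurable
    unfold Function.uncurry
    fun_prop
  have hKb : ∀ v y : ℝ, ‖kAux a (v - y)‖ ≤ 1 := fun v y => by
    rw [Real.norm_of_nonneg (kAux_nonneg _ _)]; exact kAux_le _ _
  have hKz : ∀ v y : ℝ, 1 < |v - y| → kAux a (v - y) = 0 :=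
    fun v y h => kAux_zero (by linarith)
  obtain ⟨hm0, hmL⟩ := memLp_aux μ hμ (fun v y => kAux a (v - y)) hKm 1 hKb hKz 2
  obtain ⟨-, hnL⟩ := memLp_aux ν hν (fun v y => kAux a (v - y)) hKm 1 hKb hKz 2
  have hmn : ∀ v, 0 ≤ m v := fun v => integral_nonneg fun _ => kAux_nonneg _ _
  have hnn : ∀ v, 0 ≤ n v := fun v => integral_nonneg fun _ => kAux_nonneg _ _
  have step2 : ∫ x, (∫ y, eAux (ξ * (x * y)) ∂ν) ∂μ = ∫ v, G v * (m v : ℂ) := by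
    have := swap_aux μ (kAux a) hk hki (fun _ => 1) G measurable_const hGm 1 a⁻¹ (by simp) hGB
    simp only [one_mul, mul_one, integral_complex_ofReal] at this
    simp_rw [step1]
    exact this
  -- H
  set H : ℝ → ℂ := fun v => ∫ y, (kAux a (v - y) : ℂ) * b y ∂ν with hH
  have hHK : StronglyMeasurable (Function.uncurry fun v y : ℝ => (kAux a (v - y) : ℂ) * b y) := by
    apply Measurable.stronglyMeasurable
    unfold Function.uncurry
    fun_prop
  have hHb' : ∀ v y : ℝ, ‖(kAux a (v - y) : ℂ) * b y‖ ≤ a⁻¹ * kAux a (v - y) := fun v y => by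
    rw [norm_mul, Complex.norm_real, Real.norm_of_nonneg (kAux_nonneg _ _), mul_comm]
    exact mul_le_mul_of_nonneg_right (hbB _) (kAux_nonneg _ _)
  have hHb : ∀ v y : ℝ, ‖(kAux a (v - y) : ℂ) * b y‖ ≤ a⁻¹ := fun v y =>
    (hHb' v y).trans (mul_le_of_le_one_right hai.le (kAux_le _ _))
  have hHz : ∀ v y : ℝ, 1 < |v - y| → (kAux a (v - y) : ℂ) * b y = 0 :=
    fun v y h => by rw [hKz v y h]; simp
  have hHL := fun p => (memLp_aux ν hν (fun v y => (kAux a (v - y) : ℂ) * b y) hHK a⁻¹ hHb hHz p).2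
  have hH1 : Integrable H := memLp_one_iff_integrable.1 (hHL 1)
  obtain ⟨hFL, hFn⟩ := plancherel_aux H hH1 (hHL 2)
  have hHn : ∀ v, ‖H v‖ ≤ a⁻¹ * n v := by
    intro v
    have hi : Integrable (fun y => a⁻¹ * kAux a (v - y)) ν := by
      refine Integrable.const_mul ?_ _
      refine Integrable.of_bound (C := 1) ?_ (Filter.Eventually.of_forall (hKb v))
      apply Measurable.aestronglyMeasurable
      fun_prop
    have := norm_integral_le_of_norm_le hi (Filter.Eventually.of_forall (hHb' v))
    rwa [integral_const_mul] at this
  have step3 : ∀ u, |u| ≤ 2 → ‖G u‖ ≤ a⁻¹ * ‖𝓕 H (ξ * u)‖ := by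
    intro u hu
    have e1 : G u * S u = 𝓕 H (ξ * u) := by
      have h1 := swap_aux ν (kAux a) hk hki b (fun v => eAux (ξ * u * v)) hbm (by fun_prop)
        a⁻¹ 1 hbB (fun y => (eAux_norm _).le)
      rw [Real.fourier_real_eq_integral_exp_smul]
      have h2 : ∀ y, b y * ∫ w, (kAux a w : ℂ) * eAux (ξ * u * (y + w))
          = b y * eAux (ξ * u * y) * S u := by
        intro y
        simp only [mul_add, eAux_add, hSdef]
        rw [mul_assoc (b y), ← integral_const_mul (eAux (ξ * u * y))]
        congr 2; ext w; ring
      simp_rw [h2, integral_mul_const] at h1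
      refine h1.trans ?_
      congr 1; ext v
      rw [smul_eq_mul, eAux]
      congr 2
      push_cast; ring
    have e2 : ‖G u‖ * a ≤ ‖𝓕 H (ξ * u)‖ := by
      rw [← e1, norm_mul]
      exact mul_le_mul_of_nonneg_left (hSlow u hu) (norm_nonneg _)
    rw [inv_mul_eq_div, le_div_iff₀ ha]
    exact e2
  set Φ : ℝ → ℝ := fun u => ‖𝓕 H (ξ * u)‖ with hΦ
  have hFc : Continuous (𝓕 H) :=
    VectorFourier.fourierIntegral_continuous Real.continuous_fourierChar
      (L := innerₗ ℝ) (by fun_prop) hH1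
  have hΦL : MemLp Φ 2 := by
    have hc : Continuous Φ := by fun_prop
    rw [memLp_two_iff_integrable_sq hc.aestronglyMeasurable]
    have h1 := (memLp_two_iff_integrable_sq_norm hFc.aestronglyMeasurable).1 hFL
    exact h1.comp_mul_left' hξ
  have hΦI : ∫ u, Φ u ^ 2 ≤ |ξ|⁻¹ * ((a⁻¹) ^ 2 * ∫ v, n v ^ 2) := by
    have h1 := Measure.integral_comp_mul_left (fun u => ‖𝓕 H u‖ ^ 2) ξ
    simp only [hΦ]
    rw [h1, hFn, smul_eq_mul, abs_inv]
    refine mul_le_mul_of_nonneg_left ?_ (by positivity)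
    rw [← integral_const_mul]
    refine integral_mono ?_ (hnL.integrable_sq.const_mul _) fun v => ?_
    · exact (memLp_two_iff_integrable_sq_norm (hHL 2).1).1 (hHL 2)
    · have := hHn v
      calc ‖H v‖ ^ 2 ≤ (a⁻¹ * n v) ^ 2 := by gcongr
        _ = _ := by ring
  have hprod : Integrable (fun u => Φ u * m u) := hΦL.integrable_mul hmL
  have step4 : ‖∫ v, G v * (m v : ℂ)‖ ≤ a⁻¹ * ∫ u, Φ u * m u := by
    rw [← integral_const_mul]
    refine norm_integral_le_of_norm_le (hprod.const_mul _) (Filter.Eventually.of_forall fun u => ?_)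
    rw [norm_mul, Complex.norm_real, Real.norm_of_nonneg (hmn u)]
    by_cases hu : |u| ≤ 2
    · rw [← mul_assoc]
      exact mul_le_mul_of_nonneg_right (step3 u hu) (hmn u)
    · have : m u = 0 := hm0 u (not_le.1 hu)
      simp [this]
  have step5 : ∫ u, Φ u * m u ≤ Real.sqrt (∫ u, Φ u ^ 2) * Real.sqrt (∫ u, m u ^ 2) := by
    have := integral_mul_le_Lp_mul_Lq_of_nonneg (μ := volume) (f := Φ) (g := m)
      Real.HolderConjugate.two_two (Filter.Eventually.of_forall fun u => norm_nonneg _)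
      (Filter.Eventually.of_forall hmn) (by simpa using hΦL) (by simpa using hmL)
    simpa [Real.sqrt_eq_rpow] using this
  rw [step2]
  refine step4.trans ?_
  rw [mul_assoc]
  refine mul_le_mul_of_nonneg_left ?_ hai.le
  refine step5.trans ?_
  rw [← mul_assoc]
  refine mul_le_mul_of_nonneg_right ?_ (Real.sqrt_nonneg _)
  refine (Real.sqrt_le_sqrt hΦI).trans (le_of_eq ?_)
  rw [Real.sqrt_mul (by positivity), Real.sqrt_mul (by positivity), Real.sqrt_sq hai.le]
  ring

lemma reg_aux (P : ℝ → ℝ) (hP : Continuous P)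
    (hl : ∀ x, Set.indicator (Set.Icc (-(1:ℝ)/2) (1/2)) 1 x ≤ P x)
    (hu : ∀ x, P x ≤ Set.indicator (Set.Icc (-1:ℝ) 1) 1 x)
    (δ : ℝ) (hδ : 0 < δ) (hδ1 : δ ≤ 1) (s : ℝ) (μ : Measure ℝ) [IsProbabilityMeasure μ]
    (hμ : μ (Set.Icc (-1:ℝ) 1)ᶜ = 0)
    (h : (∫ x : ℝ, (∫ y, δ⁻¹ * P ((x - y) / δ) ∂μ) ^ 2) ≤ δ ^ (-1 + s)) :
    Real.sqrt (∫ v, (∫ y, kAux (δ / 32) (v - y) ∂μ) ^ 2) ≤ δ ^ ((1 + s) / 2) := by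
  have hP0 : ∀ x, 0 ≤ P x := fun x =>
    (Set.indicator_nonneg (fun _ _ => zero_le_one) _).trans (hl x)
  have hP1 : ∀ x, P x ≤ 1 := fun x =>
    (hu x).trans (Set.indicator_le_self' (fun _ _ => zero_le_one) x)
  have hK := (memLp_aux μ hμ (fun v y => δ⁻¹ * P ((v - y) / δ)) (by
      apply Continuous.stronglyMeasurable
      unfold Function.uncurry
      fun_prop) δ⁻¹ (fun v y => by
        rw [Real.norm_of_nonneg (mul_nonneg (by positivity) (hP0 _))]
        exact mul_le_of_le_one_right (by positivity) (hP1 _))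
      (fun v y hvy => by
        have : P ((v - y) / δ) = 0 := by
          refine le_antisymm ((hu _).trans (le_of_eq ?_)) (hP0 _)
          apply Set.indicator_of_notMem
          intro hc
          have h2 := abs_le.2 hc
          rw [abs_div, abs_of_pos hδ, div_le_one hδ] at h2
          linarith
        rw [this, mul_zero]) 2).2
  have hpt : ∀ v, ∫ y, kAux (δ / 32) (v - y) ∂μ ≤ δ * ∫ y, δ⁻¹ * P ((v - y) / δ) ∂μ := by
    intro v
    rw [← integral_const_mul]
    refine integral_mono_of_nonneg (Filter.Eventually.of_forall fun y => kAux_nonneg _ _) ?_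
      (Filter.Eventually.of_forall fun y => ?_)
    · refine Integrable.of_bound (C := 1) ?_ (Filter.Eventually.of_forall fun y => ?_)
      · apply Continuous.aestronglyMeasurable
        fun_prop
      · rw [mul_inv_cancel_left₀ hδ.ne', Real.norm_of_nonneg (hP0 _)]
        exact hP1 _
    · change kAux (δ / 32) (v - y) ≤ δ * (δ⁻¹ * P ((v - y) / δ))
      rw [mul_inv_cancel_left₀ hδ.ne']
      by_cases hvy : |v - y| ≤ δ / 32
      · refine (kAux_le _ _).trans ?_
        refine le_trans (le_of_eq ?_) (hl _)
        rw [Set.indicator_of_mem]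
        · rfl
        · have h2 : |(v - y) / δ| ≤ 1 / 2 := by
            rw [abs_div, abs_of_pos hδ, div_le_iff₀ hδ]; linarith
          have h3 := abs_le.1 h2
          constructor <;> linarith [h3.1, h3.2]
      · rw [kAux_zero (not_le.1 hvy)]; exact hP0 _
  have hI : ∫ v, (∫ y, kAux (δ / 32) (v - y) ∂μ) ^ 2 ≤ δ ^ 2 * δ ^ (-1 + s) := by
    refine le_trans ?_ (mul_le_mul_of_nonneg_left h (by positivity))
    rw [← integral_const_mul]
    refine integral_mono_of_nonneg (Filter.Eventually.of_forall fun y => sq_nonneg _)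
      (hK.integrable_sq.const_mul _) (Filter.Eventually.of_forall fun v => ?_)
    have h0 : 0 ≤ ∫ y, kAux (δ / 32) (v - y) ∂μ := integral_nonneg fun _ => kAux_nonneg _ _
    change _ ^ 2 ≤ δ ^ 2 * _ ^ 2
    rw [← mul_pow]
    exact pow_le_pow_left₀ h0 (hpt v) 2
  apply Real.sqrt_le_iff.2
  refine ⟨by positivity, hI.trans (le_of_eq ?_)⟩
  rw [← Real.rpow_natCast, ← Real.rpow_natCast, ← Real.rpow_mul hδ.le, ← Real.rpow_add hδ]
  congr 1
  push_cast; ring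
end helpers

/-- Base case `n = 2`: if the `δ`-regularizations satisfy `‖μ_δ‖₂² ≤ δ^{s-1}` and
`‖ν_δ‖₂² ≤ δ^{t-1}`, then `|(μ⊠ν)^(ξ)| ≤ C δ^{(s+t-1)/2}` for `δ⁻¹ ≤ |ξ| ≤ 2δ⁻¹`. -/
theorem stmt2 :
    ∃ C > (0:ℝ), ∀ P : ℝ → ℝ, ContDiff ℝ (⊤ : ℕ∞) P →
      (∀ x y : ℝ, |x| ≤ |y| → P y ≤ P x) →
      (∀ x, Set.indicator (Set.Icc (-(1:ℝ)/2) (1/2)) 1 x ≤ P x) →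
      (∀ x, P x ≤ Set.indicator (Set.Icc (-1:ℝ) 1) 1 x) →
      ∀ δ : ℝ, δ ∈ Set.Ioc (0:ℝ) 1 →
      ∀ s : ℝ, s ∈ Set.Icc (0:ℝ) 1 → ∀ t : ℝ, t ∈ Set.Icc (0:ℝ) 1 →
      ∀ μ ν : Measure ℝ, IsProbabilityMeasure μ → IsProbabilityMeasure ν →
      μ (Set.Icc (-1:ℝ) 1)ᶜ = 0 → ν (Set.Icc (-1:ℝ) 1)ᶜ = 0 →
      (∫ x : ℝ, (∫ y, δ⁻¹ * P ((x - y) / δ) ∂μ) ^ 2) ≤ δ ^ (-1 + s) →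
      (∫ x : ℝ, (∫ y, δ⁻¹ * P ((x - y) / δ) ∂ν) ^ 2) ≤ δ ^ (-1 + t) →
      ∀ ξ : ℝ, δ⁻¹ ≤ |ξ| → |ξ| ≤ 2 * δ⁻¹ →
      ‖∫ x, ∫ y, Complex.exp (-(2 * Real.pi * ξ * (x * y)) * Complex.I) ∂ν ∂μ‖ ≤
        C * δ ^ ((s + t - 1) / 2) := by
  refine ⟨1024, by norm_num, ?_⟩
  intro P hP _ hl hu δ hδ s _ t _ μ ν hμp hνp hμ hν h1 h2 ξ hξ1 hξ2
  obtain ⟨hδ0, hδ1⟩ := hδ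
  have hdi : 0 < δ⁻¹ := inv_pos.2 hδ0
  have hξ0 : 0 < |ξ| := lt_of_lt_of_le hdi hξ1
  have hm := reg_aux P hP.continuous hl hu δ hδ0 hδ1 s μ hμ h1
  have hn := reg_aux P hP.continuous hl hu δ hδ0 hδ1 t ν hν h2
  have hc := core_aux ξ (δ / 32) (by positivity) (by linarith) (abs_pos.1 hξ0) (by
    calc |ξ| * 2 * (δ / 32) ≤ (2 * δ⁻¹) * 2 * (δ / 32) := by gcongr
      _ = 1 / 8 := by field_simp; norm_num) μ ν hμ hν
  have hx : Real.sqrt |ξ|⁻¹ ≤ δ ^ ((1:ℝ) / 2) := by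
    rw [← Real.sqrt_eq_rpow]
    apply Real.sqrt_le_sqrt
    rw [inv_le_comm₀ hξ0 hδ0]
    exact hξ1
  have hL : ∫ x, (∫ y, eAux (ξ * (x * y)) ∂ν) ∂μ
      = ∫ x, ∫ y, Complex.exp (-(2 * Real.pi * ξ * (x * y)) * Complex.I) ∂ν ∂μ := by
    congr 1; ext x; congr 1; ext y
    rw [eAux]; congr 1; push_cast; ring
  rw [← hL]
  refine hc.trans ?_
  calc _ ≤ ((δ / 32)⁻¹ * (δ / 32)⁻¹) * (δ ^ ((1:ℝ) / 2) * δ ^ ((1 + t) / 2)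
        * δ ^ ((1 + s) / 2)) := by gcongr
    _ = 1024 * (δ ^ (-2 : ℝ) * (δ ^ ((1:ℝ) / 2) * δ ^ ((1 + t) / 2)
        * δ ^ ((1 + s) / 2))) := by
        have : δ ^ (-2 : ℝ) = (δ ^ 2)⁻¹ := by
          rw [Real.rpow_neg hδ0.le]; norm_cast
        rw [this]
        field_simp
        norm_num
    _ = 1024 * δ ^ ((s + t - 1) / 2) := by
        rw [← Real.rpow_add hδ0, ← Real.rpow_add hδ0, ← Real.rpow_add hδ0]
        congr 2; ring
end
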